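/- arXiv:2402.02573 — 8 statements merged into one kernel-verified Lean document; each statement's English description precedes it below -/
import Mathlib

section
/- Let X be a finite abstract simplicial complex, d ≥ 1, and R a commutative ring. (i) If 0 ≠ c ∈ H^d(X;R), then there exists a strong connectivity component Y of dimension d of X such that the restriction of c to Y is nonzero in H^d(Y;R); in particular the restriction map from H^d(X;R) to the direct sum of H^d(Y;R) over all d-dimensional strong connectivity components Y is injective. (ii) If a, b ∈ H^*(X;R) satisfy a∪b ≠ 0 in H^d(X;R), then there exists such a component Y with (a|_Y)∪(b|_Y) ≠ 0 in H^d(Y;R). (iii) If moreover d is the maximal dimension of a face of X, then the restriction map H^d(X;R) → ⊕_Y H^d(Y;R) is an isomorphism. -/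
/-!
A `d`-coboundary condition is a condition on the `d`-faces only, and on a `d`-face `s` it involves
the values of the primitive on the facets of `s` only. Two `d`-faces with a common facet
lie in the same strong connectivity component, so every `(d-1)`-face `t` of a `d`-face belongs to
exactly one component. Primitives chosen on the components therefore glue to a primitive on `X`
(`isCoboundary_of_components`), which gives injectivity and, by contraposition, the detection
statements for classes and for cup products.

Likewise each `d`-face lies in exactly one component, so `d`-cochains given on the components glue
to a `d`-cochain on `X`; when `d` is the top dimension it is automatically a cocycle.
-/

open Finset MeasureTheory
open scoped ENNReal

/-- A finite abstract simplicial complex on vertex type `V`. -/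
structure SComplex (V : Type) where
  faces : Finset (Finset V)
  down_closed : ∀ ⦃s⦄, s ∈ faces → ∀ ⦃t : Finset V⦄, t ⊆ s → t ∈ faces

/-- Simplicial coboundary of a cochain. -/
def delta {V : Type} [LinearOrder V] {R : Type} [CommRing R]
    (a : Finset V → R) : Finset V → R :=
  fun s => ∑ v ∈ s, (-1 : R) ^ (s.filter (fun w => w < v)).card * a (s.erase v)

def IsCocycle {V : Type} [LinearOrder V] (X : SComplex V) (R : Type) [CommRing R]
    (k : ℕ) (a : Finset V → R) : Prop :=
  ∀ s ∈ X.faces, s.card = k + 2 → delta a s = 0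

def IsCoboundary {V : Type} [LinearOrder V] (X : SComplex V) (R : Type) [CommRing R]
    (k : ℕ) (a : Finset V → R) : Prop :=
  ∃ f : Finset V → R, ∀ s ∈ X.faces, s.card = k + 1 → a s = delta f s

/-- The simplicial cup product of a `k`-cochain and an `l`-cochain. -/
def cup {V : Type} [LinearOrder V] {R : Type} [CommRing R] (k l : ℕ)
    (a b : Finset V → R) : Finset V → R :=
  fun s => a ((s.sort (· ≤ ·)).take (k + 1)).toFinset *
    b ((s.sort (· ≤ ·)).drop k).toFinset

/-- Bernoulli measure on `Bool` with success probability `p`. -/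
noncomputable def bernoulliMeasure (p : ℝ≥0∞) : Measure Bool :=
  p • Measure.dirac true + (1 - p) • Measure.dirac false

/-- Each subset `s` with `|s| = i+1` is selected independently with probability `p i`. -/
noncomputable def selectionMeasure (n : ℕ) (p : ℕ → ℝ≥0∞) :
    Measure (Finset (Fin n) → Bool) :=
  Measure.pi fun s => bernoulliMeasure (p (s.card - 1))

/-- The lower multiparametric model: maximal complex contained in the selected hypergraph. -/
def lowerComplex (n : ℕ) (ω : Finset (Fin n) → Bool) : SComplex (Fin n) where
  faces := Finset.univ.filter fun s => ∀ t ⊆ s, 2 ≤ t.card → ω t = true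
  down_closed := by
    intro s hs t hts
    simp only [Finset.mem_filter, Finset.mem_univ, true_and] at hs ⊢
    exact fun u hu hc => hs u (hu.trans hts) hc

/-- The upper multiparametric model: minimal complex containing the selected hypergraph. -/
def upperComplex (n : ℕ) (ω : Finset (Fin n) → Bool) : SComplex (Fin n) where
  faces := Finset.univ.filter fun s =>
    s.card ≤ 1 ∨ ∃ t, s ⊆ t ∧ 2 ≤ t.card ∧ ω t = true
  down_closed := by
    intro s hs t hts
    simp only [Finset.mem_filter, Finset.mem_univ, true_and] at hs ⊢
    rcases hs with h | ⟨u, hsu, hc, hω⟩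
    · exact Or.inl (le_trans (Finset.card_le_card hts) h)
    · exact Or.inr ⟨u, hts.trans hsu, hc, hω⟩

/-- Selection probabilities of the lower model: `p i = n ^ (-α i)`. -/
noncomputable def lowerP (α : ℕ → ℝ) (n : ℕ) : ℕ → ℝ≥0∞ :=
  fun i => ENNReal.ofReal ((n : ℝ) ^ (-(α i)))

/-- Selection probabilities of the upper model with `D` parameters. -/
noncomputable def upperP (D : ℕ) (α : ℕ → ℝ) (n : ℕ) : ℕ → ℝ≥0∞ :=
  fun i => if i ≤ D then ENNReal.ofReal ((n : ℝ) ^ (-(α i))) else 0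

def S1 (α : ℕ → ℝ) (k : ℕ) : ℝ :=
  ∑ i ∈ Finset.Icc 1 (k + 1), ((k + 1).choose i : ℝ) * α i

def S2 (α : ℕ → ℝ) (k : ℕ) : ℝ :=
  ∑ i ∈ Finset.Icc 1 k, ((k + 2).choose (i + 1) : ℝ) * α i

/-- The `d`-dimensional faces of a complex. -/
def dimFaces {V : Type} [DecidableEq V] (X : SComplex V) (d : ℕ) : Finset (Finset V) :=
  X.faces.filter fun s => s.card = d + 1

/-- Adjacency of `d`-faces: sharing a `(d-1)`-dimensional face. -/
def AdjRel {V : Type} [DecidableEq V] (X : SComplex V) (d : ℕ) (σ τ : Finset V) : Prop :=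
  σ ∈ dimFaces X d ∧ τ ∈ dimFaces X d ∧ d ≤ (σ ∩ τ).card

def IsPure {V : Type} [DecidableEq V] (X : SComplex V) (d : ℕ) : Prop :=
  ∀ s ∈ X.faces, ∃ t ∈ X.faces, s ⊆ t ∧ t.card = d + 1

def StronglyConnected {V : Type} [DecidableEq V] (X : SComplex V) (d : ℕ) : Prop :=
  (dimFaces X d).Nonempty ∧
    ∀ σ ∈ dimFaces X d, ∀ τ ∈ dimFaces X d, Relation.ReflTransGen (AdjRel X d) σ τ

open scoped Classical in
/-- The strong connectivity component of the `d`-face `σ0`. -/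
noncomputable def component {V : Type} [DecidableEq V] (X : SComplex V) (d : ℕ)
    (σ0 : Finset V) : SComplex V where
  faces := (X.faces.filter fun τ =>
      τ.card = d + 1 ∧ Relation.ReflTransGen (AdjRel X d) σ0 τ).biUnion Finset.powerset
  down_closed := by
    intro s hs t hts
    simp only [Finset.mem_biUnion, Finset.mem_powerset] at hs ⊢
    obtain ⟨u, hu, hsu⟩ := hs
    exact ⟨u, hu, hts.trans hsu⟩

/-- The `d`-skeleton of a complex. -/
def skeleton {V : Type} [DecidableEq V] (X : SComplex V) (d : ℕ) : SComplex V where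
  faces := X.faces.filter fun s => s.card ≤ d + 1
  down_closed := by
    intro s hs t hts
    simp only [Finset.mem_filter] at hs ⊢
    exact ⟨X.down_closed hs.1 hts, le_trans (Finset.card_le_card hts) hs.2⟩

/-- The subcomplex generated by a family of faces. -/
def generated {V : Type} [DecidableEq V] (F : Finset (Finset V)) : SComplex V where
  faces := F.biUnion Finset.powerset
  down_closed := by
    intro s hs t hts
    simp only [Finset.mem_biUnion, Finset.mem_powerset] at hs ⊢
    obtain ⟨u, hu, hsu⟩ := hs
    exact ⟨u, hu, hts.trans hsu⟩

/-- There is an elementary collapse from `X` to `Y`. -/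
def ElemCollapse {V : Type} [DecidableEq V] (X Y : SComplex V) : Prop :=
  ∃ σ τ : Finset V, σ ∈ X.faces ∧ τ ∈ X.faces ∧ σ ⊂ τ ∧ τ.card = σ.card + 1 ∧
    (∀ ρ ∈ X.faces, σ ⊆ ρ → ρ = σ ∨ ρ = τ) ∧ Y.faces = X.faces \ {σ, τ}

/-- `X` collapses onto dimension `l`. -/
def CollapsesOntoDim {V : Type} [DecidableEq V] (X : SComplex V) (l : ℤ) : Prop :=
  ∃ Y : SComplex V, Relation.ReflTransGen ElemCollapse X Y ∧
    ∀ s ∈ Y.faces, (s.card : ℤ) ≤ l + 1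

/-- Expected number of embeddings of `C` into the lower multiparametric complex. -/
noncomputable def expEmb {W : Type} [Fintype W] [DecidableEq W] (C : SComplex W)
    (α : ℕ → ℝ) (n : ℕ) : ℝ≥0∞ :=
  ∫⁻ ω, (Nat.card {φ : W ↪ Fin n //
      ∀ σ ∈ C.faces, σ.map φ ∈ (lowerComplex n ω).faces} : ℝ≥0∞)
    ∂ selectionMeasure n (lowerP α n)

section Components

variable {V : Type} [LinearOrder V] {X : SComplex V} {d : ℕ}

theorem adjRel_symm {σ τ : Finset V} (h : AdjRel X d σ τ) : AdjRel X d τ σ :=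
  ⟨h.2.1, h.1, by rw [Finset.inter_comm]; exact h.2.2⟩

theorem component_congr {σ τ : Finset V} (h : AdjRel X d σ τ) :
    component X d σ = component X d τ := by
  have key : ∀ ρ, Relation.ReflTransGen (AdjRel X d) σ ρ ↔
      Relation.ReflTransGen (AdjRel X d) τ ρ := fun ρ =>
    ⟨fun hρ => .head (adjRel_symm h) hρ, fun hρ => .head h hρ⟩
  have hfaces : (component X d σ).faces = (component X d τ).faces := by
    ext ρ
    simp only [component, key, Finset.mem_biUnion, Finset.mem_filter]
  cases hσ : component X d σ
  cases hτ : component X d τ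
  simpa [hσ, hτ] using hfaces

theorem mem_component_self {σ : Finset V} (h : σ ∈ dimFaces X d) :
    σ ∈ (component X d σ).faces := by
  simp only [dimFaces, Finset.mem_filter] at h
  simp only [component, Finset.mem_biUnion, Finset.mem_filter, Finset.mem_powerset]
  exact ⟨σ, ⟨h.1, h.2, .refl⟩, subset_rfl⟩

/-- The `d`-faces of a component are exactly the members of the equivalence class, since a
`d`-face contained in a generating `d`-face equals it. -/
theorem reachable_of_mem_component {σ s : Finset V} (hs : s ∈ (component X d σ).faces)
    (hc : s.card = d + 1) : s ∈ dimFaces X d ∧ Relation.ReflTransGen (AdjRel X d) σ s := by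
  simp only [component, Finset.mem_biUnion, Finset.mem_filter, Finset.mem_powerset] at hs
  obtain ⟨u, ⟨huX, huc, hu⟩, hsu⟩ := hs
  obtain rfl : s = u := Finset.eq_of_subset_of_card_le hsu (by omega)
  exact ⟨by simp [dimFaces, huX, hc], hu⟩

open scoped Classical in
/-- Primitives of `c` on the components glue to a primitive of `c` on `X`. -/
theorem isCoboundary_of_components {R : Type} [CommRing R] (c : Finset V → R)
    (h : ∀ σ ∈ dimFaces X d, IsCoboundary (component X d σ) R d c) :
    IsCoboundary X R d c := by
  -- The primitive is chosen as a function of the complex `Y`, not of a face of `Y`, so that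
  -- faces of the same component receive the same primitive.
  let F : SComplex V → Finset V → R := fun Y =>
    if hY : IsCoboundary Y R d c then hY.choose else 0
  refine ⟨fun t => if ht : ∃ σ ∈ dimFaces X d, t ⊆ σ then F (component X d ht.choose) t else 0,
    fun s hs hsc => ?_⟩
  have hsd : s ∈ dimFaces X d := by simp [dimFaces, hs, hsc]
  have hF : c s = delta (F (component X d s)) s := by
    have hY := h s hsd
    simp only [F, dif_pos hY]
    exact hY.choose_spec s (mem_component_self hsd) hsc
  rw [hF]
  refine Finset.sum_congr rfl fun v hv => ?_
  have ht : ∃ σ ∈ dimFaces X d, s.erase v ⊆ σ := ⟨s, hsd, Finset.erase_subset v s⟩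
  -- The `d`-face chosen for the facet `s.erase v` shares that facet with `s`.
  have hadj : AdjRel X d s ht.choose := by
    refine ⟨hsd, ht.choose_spec.1, ?_⟩
    calc d = (s.erase v).card := by rw [Finset.card_erase_of_mem hv, hsc]; rfl
      _ ≤ _ := Finset.card_le_card
        (Finset.subset_inter (Finset.erase_subset v s) ht.choose_spec.2)
  beta_reduce
  rw [dif_pos ht, component_congr hadj]

end Components

/-- cohomology in dimension `d`, the image of the cup product, concentrate on
`d`-dimensional strong connectivity components: (i) a nonzero class restricts to a nonzero
class on some component, and the restriction map to the direct sum over components is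
injective; (ii) likewise for a nonvanishing cup product; (iii) if `d` is the maximal
dimension of a face, the restriction map is moreover surjective (an isomorphism). -/
theorem cohomology_concentrated_on_components {V : Type} [LinearOrder V]
    (X : SComplex V) (d : ℕ) (hd : 1 ≤ d) (R : Type) [CommRing R] :
    -- (i) nonzero classes are detected on some component, i.e. the restriction map
    -- `H^d(X) → ⊕_Y H^d(Y)` is injective
    ((∀ c : Finset V → R, IsCocycle X R d c → ¬ IsCoboundary X R d c →
        ∃ σ0 ∈ dimFaces X d, ¬ IsCoboundary (component X d σ0) R d c) ∧
     (∀ c : Finset V → R, IsCocycle X R d c →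
        (∀ σ0 ∈ dimFaces X d, IsCoboundary (component X d σ0) R d c) →
        IsCoboundary X R d c)) ∧
    -- (ii) a nonvanishing cup product restricts nonvanishing to some component
    (∀ p q : ℕ, p + q = d → ∀ a b : Finset V → R,
        IsCocycle X R p a → IsCocycle X R q b →
        ¬ IsCoboundary X R d (cup p q a b) →
        ∃ σ0 ∈ dimFaces X d, ¬ IsCoboundary (component X d σ0) R d (cup p q a b)) ∧
    -- (iii) if `d` is the maximal dimension then the restriction map is also surjective
    ((∀ s ∈ X.faces, s.card ≤ d + 1) →
      ∀ g : Finset V → (Finset V → R),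
        (∀ σ0 ∈ dimFaces X d, IsCocycle (component X d σ0) R d (g σ0)) →
        (∀ σ0 ∈ dimFaces X d, ∀ τ0 ∈ dimFaces X d,
          Relation.ReflTransGen (AdjRel X d) σ0 τ0 → g σ0 = g τ0) →
        ∃ c : Finset V → R, IsCocycle X R d c ∧
          ∀ σ0 ∈ dimFaces X d,
            IsCoboundary (component X d σ0) R d (fun s => c s - g σ0 s)) := by
  have detect : ∀ c : Finset V → R, ¬ IsCoboundary X R d c →
      ∃ σ0 ∈ dimFaces X d, ¬ IsCoboundary (component X d σ0) R d c := by
    intro c hc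
    by_contra! hno
    exact hc (isCoboundary_of_components c hno)
  refine ⟨⟨fun c _ hc => detect c hc, fun c _ h => isCoboundary_of_components c h⟩,
    fun p q _ a b _ _ hab => detect _ hab, fun hmax g _ hg => ?_⟩
  refine ⟨fun s => g s s, fun s hs hsc => ?_, fun σ hσ => ⟨0, fun s hs hsc => ?_⟩⟩
  · have := hmax s hs
    omega
  · obtain ⟨hsd, hr⟩ := reachable_of_mem_component hs hsc
    simp [delta, hg σ hσ s hsd hr]
end

section
/- Let k ≥ 1 be a natural number and let α_1, α_2, … be nonnegative real numbers. If Σ_{i=1}^{k+1} C(k+1,i)·α_i ≥ 1, then Σ_{i=1}^{2k+1} C(2k+3,i+1)·α_i ≥ 2k+3. Equivalently, it is impossible to have simultaneously S_1^k(α) ≥ 1 and S_2^{2k+1}(α) < 2k+3. -/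
/-!
The inequality holds coefficientwise: `(2k+3) * C(k+1,i) ≤ C(2k+3,i+1)` for every `i`. Since
`(i+1) * C(2k+3,i+1) = (2k+3) * C(2k+2,i)`, this amounts to `(i+1) * C(m,i) ≤ C(2m,i)` with
`m = k+1` (`succ_mul_choose_le_choose_two_mul`). The terms with `k+1 < i ≤ 2k+1` are nonnegative
and can be dropped.
-/

open Finset MeasureTheory
open scoped ENNReal

/-- When `i` increases by one, the left side is multiplied by
`(i+2)(m-i)/(i+1)^2 ≤ 2(m-i)/(i+1)`, and the right side by `(2m-i)/(i+1)`. -/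
lemma succ_mul_choose_le_choose_two_mul (m i : ℕ) :
    (i + 1) * m.choose i ≤ (2 * m).choose i := by
  induction i with
  | zero => simp
  | succ i ih =>
    have h1 := Nat.choose_succ_right_eq m i
    have h2 := Nat.choose_succ_right_eq (2 * m) i
    have h3 : 2 * (m - i) ≤ 2 * m - i := by omega
    refine Nat.le_of_mul_le_mul_right ?_ (Nat.succ_pos i)
    calc (i + 1 + 1) * m.choose (i + 1) * (i + 1)
        = (i + 2) * (m.choose i * (m - i)) := by rw [← h1]; ring
      _ ≤ (2 * (i + 1)) * (m.choose i * (m - i)) := Nat.mul_le_mul_right _ (by omega)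
      _ = ((i + 1) * m.choose i) * (2 * (m - i)) := by ring
      _ ≤ (2 * m).choose i * (2 * m - i) := Nat.mul_le_mul ih h3
      _ = (2 * m).choose (i + 1) * (i + 1) := h2.symm

lemma mul_choose_le_choose_succ (k i : ℕ) :
    (2 * k + 3) * (k + 1).choose i ≤ (2 * k + 3).choose (i + 1) := by
  have h1 : (2 * k + 3) * (2 * (k + 1)).choose i = (2 * k + 3).choose (i + 1) * (i + 1) :=
    Nat.add_one_mul_choose_eq (2 * k + 2) i
  refine Nat.le_of_mul_le_mul_right ?_ (Nat.succ_pos i)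
  calc (2 * k + 3) * (k + 1).choose i * (i + 1)
      = (2 * k + 3) * ((i + 1) * (k + 1).choose i) := by ring
    _ ≤ (2 * k + 3) * (2 * (k + 1)).choose i :=
        Nat.mul_le_mul_left _ (succ_mul_choose_le_choose_two_mul (k + 1) i)
    _ = (2 * k + 3).choose (i + 1) * (i + 1) := h1

/-- if `S1^k(α) ≥ 1` then `S2^{2k+1}(α) ≥ 2k+3`; one cannot have both
`S1^k(α) ≥ 1` and `S2^{2k+1}(α) < 2k+3`. -/
theorem S1_ge_one_implies_S2_large (k : ℕ) (hk : 1 ≤ k) (α : ℕ → ℝ) (hα : ∀ i, 0 ≤ α i)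
    (h : 1 ≤ ∑ i ∈ Finset.Icc 1 (k + 1), ((k + 1).choose i : ℝ) * α i) :
    (2 * k + 3 : ℝ) ≤
      ∑ i ∈ Finset.Icc 1 (2 * k + 1), ((2 * k + 3).choose (i + 1) : ℝ) * α i := by
  calc (2 * k + 3 : ℝ)
      ≤ (2 * k + 3) * ∑ i ∈ Finset.Icc 1 (k + 1), ((k + 1).choose i : ℝ) * α i :=
        le_mul_of_one_le_right (by positivity) h
    _ = ∑ i ∈ Finset.Icc 1 (k + 1), ((2 * k + 3) * ((k + 1).choose i : ℝ)) * α i := by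
        rw [Finset.mul_sum]
        exact Finset.sum_congr rfl fun i _ => by ring
    _ ≤ ∑ i ∈ Finset.Icc 1 (k + 1), ((2 * k + 3).choose (i + 1) : ℝ) * α i :=
        Finset.sum_le_sum fun i _ =>
          mul_le_mul_of_nonneg_right (by exact_mod_cast mul_choose_le_choose_succ k i) (hα i)
    _ ≤ ∑ i ∈ Finset.Icc 1 (2 * k + 1), ((2 * k + 3).choose (i + 1) : ℝ) * α i :=
        Finset.sum_le_sum_of_subset_of_nonneg
          (Finset.Icc_subset_Icc le_rfl (by omega))
          fun i _ _ => mul_nonneg (Nat.cast_nonneg _) (hα i)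
end

section
/- For all natural numbers k ≥ 1 and all i with 1 ≤ i ≤ k+1, one has (2k+3)·C(k+1,i) ≤ C(2k+3,i+1). -/
/-!
By absorption, `(i+1)·C(2k+3,i+1) = (2k+3)·C(2k+2,i)`, so with `m = k+1` the claim is equivalent to
`(i+1)·C(m,i) ≤ C(2m,i)`. Vandermonde's identity writes `C(2m,i)` as a sum of `i+1` terms, each of
which is at least `C(m,i)`; this is `succ_mul_choose_le_choose_add_self`.
-/

open Finset MeasureTheory
open scoped ENNReal

/-- Each of the `i + 1` terms `C(m,j)·C(m,i-j)` of Vandermonde's sum for `C(2m,i)` is at least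
`C(m,j)·C(m-j,i-j) = C(m,i)·C(i,j) ≥ C(m,i)`. -/
lemma succ_mul_choose_le_choose_add_self (m i : ℕ) :
    (i + 1) * m.choose i ≤ (m + m).choose i := by
  rw [Nat.add_choose_eq, Finset.Nat.sum_antidiagonal_eq_sum_range_succ_mk]
  have h : ∀ j ∈ Finset.range i.succ, m.choose i ≤ m.choose j * m.choose (i - j) := by
    intro j hj
    have hji : j ≤ i := Nat.lt_succ_iff.mp (Finset.mem_range.mp hj)
    calc m.choose i ≤ m.choose i * i.choose j :=
          Nat.le_mul_of_pos_right _ (Nat.choose_pos hji)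
      _ = m.choose j * (m - j).choose (i - j) := Nat.choose_mul hji
      _ ≤ m.choose j * m.choose (i - j) :=
          Nat.mul_le_mul_left _ (Nat.choose_le_choose _ (Nat.sub_le _ _))
  simpa using Finset.card_nsmul_le_sum _ _ _ h

/-- the coefficient-wise inequality `(2k+3)·C(k+1,i) ≤ C(2k+3,i+1)`. -/
theorem coefficientwise_binomial_ineq (k i : ℕ) (hk : 1 ≤ k) (hi1 : 1 ≤ i)
    (hi2 : i ≤ k + 1) :
    (2 * k + 3) * (k + 1).choose i ≤ (2 * k + 3).choose (i + 1) := by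
  have hm := succ_mul_choose_le_choose_add_self (k + 1) i
  have habs := Nat.add_one_mul_choose_eq (k + 1 + (k + 1)) i
  rw [show k + 1 + (k + 1) + 1 = 2 * k + 3 by ring] at habs
  refine Nat.le_of_mul_le_mul_right ?_ (Nat.succ_pos i)
  calc (2 * k + 3) * (k + 1).choose i * (i + 1)
      = (2 * k + 3) * ((i + 1) * (k + 1).choose i) := by ring
    _ ≤ (2 * k + 3) * (k + 1 + (k + 1)).choose i := Nat.mul_le_mul_left _ hm
    _ = (2 * k + 3).choose (i + 1) * (i + 1) := habs
end

section
/- For all natural numbers m, l, w with l ≥ 1 and 0 ≤ w ≤ m, one has m·(C(m,l) − C(m−w,l)) ≥ w·C(m,l). -/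
open Finset MeasureTheory
open scoped ENNReal

/-- `k ↦ C(k, l) / k` is nondecreasing for `l ≥ 1`, because it equals `C(k - 1, l - 1) / l`. -/
lemma mul_choose_le_mul_choose {k m l : ℕ} (hl : 1 ≤ l) (hk : k ≤ m) :
    m * k.choose l ≤ k * m.choose l := by
  obtain ⟨j, rfl⟩ : ∃ j, l = j + 1 := ⟨l - 1, by omega⟩
  rcases k with _ | k
  · simp
  obtain ⟨n, rfl⟩ : ∃ n, m = n + 1 := ⟨m - 1, by omega⟩
  have hmono : k.choose j ≤ n.choose j := Nat.choose_le_choose j (by omega)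
  refine Nat.le_of_mul_le_mul_right ?_ (Nat.succ_pos j)
  calc (n + 1) * (k + 1).choose (j + 1) * (j + 1)
      = (n + 1) * ((k + 1) * k.choose j) := by rw [Nat.add_one_mul_choose_eq, mul_assoc]
    _ ≤ (n + 1) * ((k + 1) * n.choose j) := by gcongr
    _ = (k + 1) * ((n + 1) * n.choose j) := by ring
    _ = (k + 1) * (n + 1).choose (j + 1) * (j + 1) := by
      rw [Nat.add_one_mul_choose_eq, mul_assoc]

/-- for `l ≥ 1` and `w ≤ m`, `m·(C(m,l) − C(m−w,l)) ≥ w·C(m,l)`. -/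
theorem simplices_added_binomial_ineq (m l w : ℕ) (hl : 1 ≤ l) (hw : w ≤ m) :
    w * m.choose l ≤ m * (m.choose l - (m - w).choose l) := by
  have h := mul_choose_le_mul_choose hl (Nat.sub_le m w)
  -- Since `w = m - (m - w)`, the claim is `h` subtracted from `m * C(m, l)`.
  have hsum : w * m.choose l + (m - w) * m.choose l = m * m.choose l := by
    rw [← add_mul, Nat.add_sub_cancel' hw]
  rw [Nat.mul_sub]
  omega
end

section
/- Let α_1, α_2 > 0 satisfy ε := 2α_1 + α_2 − 1 > 0, and let K be a natural number with K ≥ 2/ε + 4. Then in the lower multiparametric model X ~ X_(n; α_1, α_2, …) (with arbitrary α_i ≥ 0 for i ≥ 3), asymptotically almost surely X contains no strongly connected pure 2-dimensional subcomplex with K or more vertices. Consequently, a.a.s. only the finitely many isomorphism types of strongly connected pure 2-dimensional complexes on fewer than K vertices can appear as subcomplexes of X. -/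
/-!
A strongly connected pure 2-dimensional complex with at least `m + 2` vertices contains a subcomplex
built from a pair of vertices by `m` successive moves, each gluing a triangle with one new vertex
`x` along an edge `{a, b}` already present: follow an adjacency path of triangles towards a vertex
not yet reached, and stop at the first triangle that leaves the current vertex set
(`exists_growth`). Each move creates two new edges and one new triangle, so the sets recorded during
`m` moves are all selected with probability `(p₁² p₂) ^ m` (`weight_growth`).

There are at most `C n ^ (m + 2)` such constructions (`card_growth`), so by the union bound one of
them occurs with probability at most `C n ^ (m + 2) (p₁² p₂) ^ m = C n ^ (2 - m ε)`, where
`ε = 2 α₁ + α₂ - 1`. With `m = K - 2` the assumption on `K` gives `m ε ≥ 2 + 2 ε`, and the bound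
tends to zero.
-/

open Finset MeasureTheory
open scoped ENNReal

/-! ### Configurations built by gluing triangles -/

/-- The edges and the triangle created when a new vertex `x` is joined to the edge `{a, b}`. -/
def newSets {V : Type} [DecidableEq V] (x a b : V) : Finset (Finset V) :=
  {{x, a}, {x, b}, {x, a, b}}

/-- All configurations reachable by `m` gluing moves, starting from a pair of vertices. A
configuration is a pair consisting of its vertex set and of the edges and triangles recorded so far;
the initial pair of vertices, which may coincide, is not recorded as an edge. -/
def growth (n : ℕ) : ℕ → Finset (Finset (Fin n) × Finset (Finset (Fin n)))
  | 0 => (Finset.univ : Finset (Fin n × Fin n)).image fun q => ({q.1, q.2}, ∅)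
  | m + 1 => (growth n m).biUnion fun c =>
      (((Finset.univ : Finset (Fin n)) ×ˢ (c.1 ×ˢ c.1)).filter
        fun q => q.1 ∉ c.1 ∧ q.2.1 ≠ q.2.2).image
        fun q => (insert q.1 c.1, c.2 ∪ newSets q.1 q.2.1 q.2.2)

lemma mem_growth_succ {n m : ℕ} {c : Finset (Fin n) × Finset (Finset (Fin n))} :
    c ∈ growth n (m + 1) ↔ ∃ d ∈ growth n m, ∃ x a b, a ∈ d.1 ∧ b ∈ d.1 ∧ x ∉ d.1 ∧ a ≠ b ∧
      c = (insert x d.1, d.2 ∪ newSets x a b) := by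
  simp only [growth, Finset.mem_biUnion, Finset.mem_image, Finset.mem_filter, Finset.mem_product,
    Finset.mem_univ, true_and, Prod.exists]
  constructor
  · rintro ⟨V, A, hd, x, a, b, ⟨⟨ha, hb⟩, hx, hab⟩, rfl⟩
    exact ⟨V, A, hd, x, a, b, ha, hb, hx, hab, rfl⟩
  · rintro ⟨V, A, hd, x, a, b, ha, hb, hx, hab, rfl⟩
    exact ⟨V, A, hd, x, a, b, ⟨⟨ha, hb⟩, hx, hab⟩, rfl⟩

lemma card_vertices_growth {n m : ℕ} {c : Finset (Fin n) × Finset (Finset (Fin n))}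
    (hc : c ∈ growth n m) : c.1.card ≤ m + 2 := by
  induction m generalizing c with
  | zero =>
    simp only [growth, Finset.mem_image] at hc
    obtain ⟨q, -, rfl⟩ := hc
    exact Finset.card_le_two
  | succ m ih =>
    obtain ⟨d, hd, x, a, b, -, -, -, -, rfl⟩ := mem_growth_succ.1 hc
    have := ih hd
    have := Finset.card_insert_le x d.1
    simp only
    omega

lemma subset_growth {n m : ℕ} {c : Finset (Fin n) × Finset (Finset (Fin n))}
    (hc : c ∈ growth n m) : ∀ s ∈ c.2, s ⊆ c.1 := by
  induction m generalizing c with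
  | zero =>
    simp only [growth, Finset.mem_image] at hc
    obtain ⟨q, -, rfl⟩ := hc
    simp
  | succ m ih =>
    obtain ⟨d, hd, x, a, b, ha, hb, -, -, rfl⟩ := mem_growth_succ.1 hc
    intro s hs
    simp only [newSets, Finset.mem_union, Finset.mem_insert, Finset.mem_singleton] at hs
    rcases hs with hs | rfl | rfl | rfl
    · exact (ih hd s hs).trans (Finset.subset_insert _ _)
    all_goals
      intro y hy
      simp only [Finset.mem_insert, Finset.mem_singleton] at hy ⊢
      grind

/-- Each move multiplies the weight by `p₁² p₂`: the three new sets are distinct from each other, and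
they are new because they contain the new vertex. -/
lemma weight_growth {n m : ℕ} (p : ℕ → ℝ≥0∞) {c : Finset (Fin n) × Finset (Finset (Fin n))}
    (hc : c ∈ growth n m) : ∏ s ∈ c.2, p (s.card - 1) = (p 1 ^ 2 * p 2) ^ m := by
  induction m generalizing c with
  | zero =>
    simp only [growth, Finset.mem_image] at hc
    obtain ⟨q, -, rfl⟩ := hc
    simp
  | succ m ih =>
    obtain ⟨d, hd, x, a, b, ha, hb, hx, hab, rfl⟩ := mem_growth_succ.1 hc
    have hxa : x ≠ a := fun h => hx (h ▸ ha)
    have hxb : x ≠ b := fun h => hx (h ▸ hb)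
    have hdisj : Disjoint d.2 (newSets x a b) := by
      rw [Finset.disjoint_left]
      intro s hs hs'
      have hxs : x ∈ s := by
        simp only [newSets, Finset.mem_insert, Finset.mem_singleton] at hs'
        rcases hs' with rfl | rfl | rfl <;> simp
      exact hx (subset_growth hd s hs hxs)
    have c1 : ({x, a} : Finset (Fin n)).card = 2 := Finset.card_pair hxa
    have c2 : ({x, b} : Finset (Fin n)).card = 2 := Finset.card_pair hxb
    have c3 : ({x, a, b} : Finset (Fin n)).card = 3 :=
      Finset.card_eq_three.2 ⟨x, a, b, hxa, hxb, hab, rfl⟩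
    have n12 : ({x, a} : Finset (Fin n)) ≠ {x, b} := by
      intro h
      have : a ∈ ({x, b} : Finset (Fin n)) := h ▸ (by simp)
      simp only [Finset.mem_insert, Finset.mem_singleton] at this
      exact this.elim (fun h => hxa h.symm) hab
    have n13 : ({x, a} : Finset (Fin n)) ≠ {x, a, b} := by
      intro h; rw [h, c3] at c1; omega
    have n23 : ({x, b} : Finset (Fin n)) ≠ {x, a, b} := by
      intro h; rw [h, c3] at c2; omega
    simp only
    rw [Finset.prod_union hdisj, ih hd, newSets, Finset.prod_insert (by simp [n12, n13]),
      Finset.prod_insert (by simp [n23]), Finset.prod_singleton, c1, c2, c3, pow_succ]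
    ring

lemma card_growth (m : ℕ) : ∃ C : ℕ, ∀ n, (growth n m).card ≤ C * n ^ (m + 2) := by
  induction m with
  | zero =>
    refine ⟨1, fun n => Finset.card_image_le.trans ?_⟩
    simp [sq]
  | succ m ih =>
    obtain ⟨C, hC⟩ := ih
    refine ⟨C * (m + 2) ^ 2, fun n => ?_⟩
    refine (Finset.card_biUnion_le_card_mul _ _ (n * (m + 2) ^ 2) fun c hc => ?_).trans ?_
    · refine Finset.card_image_le.trans ((Finset.card_filter_le _ _).trans ?_)
      have := card_vertices_growth hc
      rw [Finset.card_product, Finset.card_product, Finset.card_univ, Fintype.card_fin, sq]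
      gcongr
    · calc (growth n m).card * (n * (m + 2) ^ 2) ≤ C * n ^ (m + 2) * (n * (m + 2) ^ 2) := by
            gcongr
            exact hC n
        _ = C * (m + 2) ^ 2 * n ^ (m + 1 + 2) := by ring

/-! ### Configurations inside strongly connected complexes -/

/-- Along an adjacency path of triangles whose first member has two vertices in `V`, either the last
member lies in `V`, or some triangle has two vertices in `V` and leaves `V`. -/
lemma exists_exit {n : ℕ} {Y : SComplex (Fin n)} {V σ τ : Finset (Fin n)}
    (hσ : σ ∈ dimFaces Y 2) (hV : 2 ≤ (σ ∩ V).card)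
    (h : Relation.ReflTransGen (AdjRel Y 2) σ τ) :
    τ ⊆ V ∨ ∃ ρ ∈ dimFaces Y 2, 2 ≤ (ρ ∩ V).card ∧ ¬ ρ ⊆ V := by
  induction h with
  | refl =>
    by_cases hs : σ ⊆ V
    · exact Or.inl hs
    · exact Or.inr ⟨σ, hσ, hV, hs⟩
  | @tail b c _ hbc ih =>
    rcases ih with hb | hb
    · by_cases hs : c ⊆ V
      · exact Or.inl hs
      · refine Or.inr ⟨c, hbc.2.1, hbc.2.2.trans (Finset.card_le_card ?_), hs⟩
        intro y hy
        rw [Finset.mem_inter] at hy ⊢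
        exact ⟨hy.2, hb hy.1⟩
    · exact Or.inr hb

/-- A strongly connected pure 2-complex with at least `m + 2` vertices contains a configuration
obtained by `m` gluing moves. The last conjunct, a triangle with two vertices in the current vertex
set, is what keeps the induction going. -/
lemma exists_growth {n : ℕ} {Y : SComplex (Fin n)} (hp : IsPure Y 2)
    (hs : StronglyConnected Y 2) (m : ℕ) (hm : m + 2 ≤ (Y.faces.sup id).card) :
    ∃ c ∈ growth n m, (∀ s ∈ c.2, s ∈ Y.faces ∧ 2 ≤ s.card) ∧
      ∃ σ ∈ dimFaces Y 2, 2 ≤ (σ ∩ c.1).card := by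
  induction m with
  | zero =>
    obtain ⟨σ, hσ⟩ := hs.1
    have hσ3 : σ.card = 3 := (Finset.mem_filter.1 hσ).2
    obtain ⟨a, b, c, hab, -, -, rfl⟩ := Finset.card_eq_three.1 hσ3
    refine ⟨({a, b}, ∅), Finset.mem_image.2 ⟨(a, b), Finset.mem_univ _, rfl⟩, by simp, _, hσ, ?_⟩
    rw [← Finset.card_pair hab]
    apply Finset.card_le_card
    intro y hy
    simp only [Finset.mem_inter, Finset.mem_insert, Finset.mem_singleton] at hy ⊢
    tauto
  | succ m ih =>
    obtain ⟨d, hd, hdY, σ, hσ, hσV⟩ := ih (by omega)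
    have hcard := card_vertices_growth hd
    have hexit : ∃ ρ ∈ dimFaces Y 2, 2 ≤ (ρ ∩ d.1).card ∧ ¬ ρ ⊆ d.1 := by
      have hw : ¬ Y.faces.sup id ⊆ d.1 := fun h => by
        have := Finset.card_le_card h
        omega
      obtain ⟨w, hw, hwV⟩ := Finset.not_subset.1 hw
      obtain ⟨s, hsY, hws⟩ := Finset.mem_sup.1 hw
      obtain ⟨t, htY, hst, ht3⟩ := hp s hsY
      rcases exists_exit hσ hσV (hs.2 σ hσ t (Finset.mem_filter.2 ⟨htY, ht3⟩)) with h | h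
      · exact absurd (h (hst hws)) hwV
      · exact h
    obtain ⟨ρ, hρ, hρV, hρn⟩ := hexit
    obtain ⟨hρY, hρ3⟩ := Finset.mem_filter.1 hρ
    obtain ⟨x, hxρ, hxV⟩ := Finset.not_subset.1 hρn
    -- `ρ` has three vertices, of which `x` is outside and at least two are inside the current set.
    have hcap : ρ ∩ d.1 = ρ.erase x := by
      apply Finset.eq_of_subset_of_card_le
      · intro y hy
        rw [Finset.mem_inter] at hy
        exact Finset.mem_erase.2 ⟨fun h => hxV (h ▸ hy.2), hy.1⟩
      · rw [Finset.card_erase_of_mem hxρ]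
        omega
    have hcap2 : (ρ.erase x).card = 2 := by
      rw [Finset.card_erase_of_mem hxρ]
      omega
    obtain ⟨a, b, hab, hE⟩ := Finset.card_eq_two.1 hcap2
    have haV : a ∈ ρ ∩ d.1 := by rw [hcap, hE]; simp
    have hbV : b ∈ ρ ∩ d.1 := by rw [hcap, hE]; simp
    have hρE : ρ = {x, a, b} := by rw [← hE, Finset.insert_erase hxρ]
    rw [Finset.mem_inter] at haV hbV
    have hxa : x ≠ a := fun h => hxV (h ▸ haV.2)
    have hxb : x ≠ b := fun h => hxV (h ▸ hbV.2)
    refine ⟨_, mem_growth_succ.2 ⟨d, hd, x, a, b, haV.2, hbV.2, hxV, hab, rfl⟩, ?_, ρ, hρ, ?_⟩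
    · intro s hs
      simp only [newSets, Finset.mem_union, Finset.mem_insert, Finset.mem_singleton] at hs
      rcases hs with hs | rfl | rfl | rfl
      · exact hdY s hs
      · refine ⟨Y.down_closed hρY ?_, (Finset.card_pair hxa).ge⟩
        simp [Finset.insert_subset_iff, hxρ, haV.1]
      · refine ⟨Y.down_closed hρY ?_, (Finset.card_pair hxb).ge⟩
        simp [Finset.insert_subset_iff, hxρ, hbV.1]
      · exact ⟨hρE ▸ hρY, by rw [← hρE]; omega⟩
    · exact hρV.trans (Finset.card_le_card
        (Finset.inter_subset_inter_left (Finset.subset_insert _ _)))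

/-! ### The union bound -/

lemma isProbabilityMeasure_bernoulliMeasure {p : ℝ≥0∞} (hp : p ≤ 1) :
    IsProbabilityMeasure (bernoulliMeasure p) := by
  constructor
  simp [bernoulliMeasure, hp]

lemma isProbabilityMeasure_selectionMeasure {n : ℕ} {p : ℕ → ℝ≥0∞} (hp : ∀ i, p i ≤ 1) :
    IsProbabilityMeasure (selectionMeasure n p) := by
  have : ∀ s : Finset (Fin n), IsProbabilityMeasure (bernoulliMeasure (p (s.card - 1))) :=
    fun s => isProbabilityMeasure_bernoulliMeasure (hp _)
  unfold selectionMeasure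
  infer_instance

lemma selectionMeasure_forall_mem {n : ℕ} {p : ℕ → ℝ≥0∞} (hp : ∀ i, p i ≤ 1)
    (A : Finset (Finset (Fin n))) :
    selectionMeasure n p {ω | ∀ s ∈ A, ω s = true} = ∏ s ∈ A, p (s.card - 1) := by
  have : ∀ s : Finset (Fin n), IsProbabilityMeasure (bernoulliMeasure (p (s.card - 1))) :=
    fun s => isProbabilityMeasure_bernoulliMeasure (hp _)
  have hset : {ω : Finset (Fin n) → Bool | ∀ s ∈ A, ω s = true} =
      Set.univ.pi fun s => if s ∈ A then {true} else Set.univ := by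
    ext ω
    simp only [Set.mem_ofPred_eq, Set.mem_univ_pi]
    refine forall_congr' fun s => ?_
    by_cases h : s ∈ A <;> simp [h]
  rw [hset, selectionMeasure, Measure.pi_pi, ← Finset.prod_subset (Finset.subset_univ A)]
  · refine Finset.prod_congr rfl fun s hs => ?_
    simp [hs, bernoulliMeasure]
  · intro s _ hs
    rw [if_neg hs]
    exact measure_univ

lemma lowerP_le_one {α : ℕ → ℝ} (hα : ∀ i, 0 ≤ α i) {n : ℕ} (hn : 1 ≤ n) (i : ℕ) :
    lowerP α n i ≤ 1 := by
  rw [lowerP, ENNReal.ofReal_le_one]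
  exact Real.rpow_le_one_of_one_le_of_nonpos (by exact_mod_cast hn) (by linarith [hα i])

/-- First moment bound for the event that some configuration built by `m` moves is selected. -/
lemma measure_growth_le {α : ℕ → ℝ} (hα : ∀ i, 0 ≤ α i) {n m C : ℕ} (hn : 1 ≤ n)
    (hC : (growth n m).card ≤ C * n ^ (m + 2)) :
    selectionMeasure n (lowerP α n) {ω | ∃ c ∈ growth n m, ∀ s ∈ c.2, ω s = true} ≤
      ENNReal.ofReal (C * (n : ℝ) ^ (-((m : ℝ) * (2 * α 1 + α 2 - 1) - 2))) := by
  have hn0 : (0 : ℝ) < n := by exact_mod_cast hn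
  have hset : {ω : Finset (Fin n) → Bool | ∃ c ∈ growth n m, ∀ s ∈ c.2, ω s = true} =
      ⋃ c ∈ growth n m, {ω | ∀ s ∈ c.2, ω s = true} := by
    ext ω
    simp
  have hw : (lowerP α n 1 ^ 2 * lowerP α n 2) ^ m =
      ENNReal.ofReal ((n : ℝ) ^ (-((m : ℝ) * (2 * α 1 + α 2)))) := by
    simp only [lowerP]
    rw [← ENNReal.ofReal_pow (by positivity), ← ENNReal.ofReal_mul (by positivity),
      ← ENNReal.ofReal_pow (by positivity)]
    congr 1
    rw [← Real.rpow_natCast _ 2, ← Real.rpow_mul hn0.le, ← Real.rpow_add hn0,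
      ← Real.rpow_natCast _ m, ← Real.rpow_mul hn0.le]
    congr 1
    push_cast
    ring
  rw [hset]
  calc _ ≤ ∑ c ∈ growth n m, selectionMeasure n (lowerP α n) {ω | ∀ s ∈ c.2, ω s = true} :=
        measure_biUnion_finset_le _ _
    _ = ∑ _c ∈ growth n m, ENNReal.ofReal ((n : ℝ) ^ (-((m : ℝ) * (2 * α 1 + α 2)))) := by
        refine Finset.sum_congr rfl fun c hc => ?_
        rw [selectionMeasure_forall_mem (lowerP_le_one hα hn), weight_growth _ hc, hw]
    _ = ((growth n m).card : ℝ≥0∞) *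
          ENNReal.ofReal ((n : ℝ) ^ (-((m : ℝ) * (2 * α 1 + α 2)))) := by
        rw [Finset.sum_const, nsmul_eq_mul]
    _ ≤ ((C * n ^ (m + 2) : ℕ) : ℝ≥0∞) *
          ENNReal.ofReal ((n : ℝ) ^ (-((m : ℝ) * (2 * α 1 + α 2)))) := by
        gcongr
    _ = _ := by
        rw [← ENNReal.ofReal_natCast, ← ENNReal.ofReal_mul (by positivity)]
        congr 1
        push_cast
        rw [mul_assoc, ← Real.rpow_natCast _ (m + 2), ← Real.rpow_add hn0]
        congr 2
        push_cast
        ring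

/-- if `ε = 2α₁ + α₂ − 1 > 0` and `K ≥ 2/ε + 4`, then a.a.s. the lower
multiparametric random complex contains no strongly connected pure 2-dimensional subcomplex
with `K` or more vertices. -/
theorem finitely_many_strong_components_dim_two (α : ℕ → ℝ) (hα : ∀ i, 0 ≤ α i)
    (h1 : 0 < α 1) (h2 : 0 < α 2) (hε : 0 < 2 * α 1 + α 2 - 1)
    (K : ℕ) (hK : 2 / (2 * α 1 + α 2 - 1) + 4 ≤ (K : ℝ)) :
    Filter.Tendsto
      (fun n => selectionMeasure n (lowerP α n)
        {ω | ∀ Y : SComplex (Fin n), Y.faces ⊆ (lowerComplex n ω).faces →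
          IsPure Y 2 → StronglyConnected Y 2 → (Y.faces.sup id).card < K})
      Filter.atTop (nhds 1) := by
  have hKε : 2 + 4 * (2 * α 1 + α 2 - 1) ≤ (K : ℝ) * (2 * α 1 + α 2 - 1) := by
    have := mul_le_mul_of_nonneg_right hK hε.le
    rwa [add_mul, div_mul_cancel₀ _ hε.ne'] at this
  have hK2 : 2 ≤ K := by
    have : 0 < 2 / (2 * α 1 + α 2 - 1) := by positivity
    have : (2 : ℝ) ≤ K := by linarith
    exact_mod_cast this
  obtain ⟨m, rfl⟩ := Nat.exists_eq_add_of_le' hK2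
  obtain ⟨C, hC⟩ := card_growth m
  have hδ : 0 < (m : ℝ) * (2 * α 1 + α 2 - 1) - 2 := by
    push_cast at hKε
    nlinarith
  have hbound : Filter.Tendsto (fun n : ℕ => ENNReal.ofReal
      (C * (n : ℝ) ^ (-((m : ℝ) * (2 * α 1 + α 2 - 1) - 2)))) Filter.atTop (nhds 0) := by
    have h := ((tendsto_rpow_neg_atTop hδ).comp tendsto_natCast_atTop_atTop).const_mul (C : ℝ)
    rw [mul_zero] at h
    simpa using ENNReal.tendsto_ofReal h
  have hlower : Filter.Tendsto (fun n : ℕ => 1 - ENNReal.ofReal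
      (C * (n : ℝ) ^ (-((m : ℝ) * (2 * α 1 + α 2 - 1) - 2)))) Filter.atTop (nhds 1) := by
    simpa using ENNReal.Tendsto.sub tendsto_const_nhds hbound (Or.inl ENNReal.one_ne_top)
  refine tendsto_of_tendsto_of_tendsto_of_le_of_le' hlower tendsto_const_nhds ?_ ?_
  · filter_upwards [Filter.eventually_ge_atTop 1] with n hn
    have := isProbabilityMeasure_selectionMeasure (n := n) (lowerP_le_one hα hn)
    have hcompl := prob_compl_eq_one_sub (μ := selectionMeasure n (lowerP α n))
      (s := {ω | ∃ c ∈ growth n m, ∀ s ∈ c.2, ω s = true}) (Set.toFinite _).measurableSet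
    refine (tsub_le_tsub_left (measure_growth_le hα hn (hC n)) 1).trans ?_
    rw [← hcompl]
    refine measure_mono fun ω hω Y hY hp hs => ?_
    by_contra! hcard
    obtain ⟨c, hc, hcY, -⟩ := exists_growth hp hs m hcard
    refine hω ⟨c, hc, fun s hsc => ?_⟩
    exact (Finset.mem_filter.1 (hY (hcY s hsc).1)).2 s Finset.Subset.rfl (hcY s hsc).2
  · filter_upwards [Filter.eventually_ge_atTop 1] with n hn
    have := isProbabilityMeasure_selectionMeasure (n := n) (lowerP_le_one hα hn)
    exact prob_le_one
end

section
/- Let k ≥ 2 be a natural number and let α_1, α_2, … be nonnegative real numbers with Σ_{i=1}^{k+1} C(k+1,i)·α_i ≥ 1. Then Σ_{i=1}^{2k} C(2k+1,i+1)·α_i ≥ k(2k+1)/(k+1) = 2k − 1 + 1/(k+1). (Hence a strongly connected 2k-dimensional component in the lower model starts with an initial budget of expected top faces less than n^{2 − 1/(k+1)}.) -/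
/-!
The bound holds termwise: for `1 ≤ i ≤ k + 1` the coefficients satisfy
`k (2k + 1) C(k + 1, i) ≤ (k + 1) C(2k + 1, i + 1)` (`choose_coeff_le`). Multiplying by `α i ≥ 0`,
summing, and discarding the nonnegative terms with `k + 1 < i ≤ 2k` gives the claim.
-/

open Finset MeasureTheory
open scoped ENNReal

/-- Termwise comparison of the coefficients, with equality at `i = 1`. Passing from `i` to `i + 1`
multiplies the left side by `(k + 1 - i) / (i + 1)` and the right side by `(2k - i) / (i + 2)`; the
second factor is at least the first because
`(2k - i)(i + 1) - (k + 1 - i)(i + 2) = k i - 2 ≥ 0`. -/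
theorem choose_coeff_le (k : ℕ) (hk : 2 ≤ k) (i : ℕ) (hi : 1 ≤ i) (hik : i ≤ k + 1) :
    (k : ℝ) * (2 * k + 1) * ((k + 1).choose i : ℝ) ≤
      (k + 1) * ((2 * k + 1).choose (i + 1) : ℝ) := by
  induction i, hi using Nat.le_induction with
  | base =>
    have h2 := Nat.add_one_mul_choose_eq (2 * k) 1
    simp only [Nat.choose_one_right] at h2 ⊢
    have h2' : ((2 * k : ℝ) + 1) * (2 * k) = ((2 * k + 1).choose 2 : ℝ) * 2 := by
      exact_mod_cast h2
    push_cast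
    exact le_of_eq (by linear_combination ((k : ℝ) + 1) / 2 * h2')
  | succ i hi ih =>
    have ih := ih (by omega)
    have ha := Nat.choose_succ_right_eq (2 * k + 1) (i + 1)
    have hb := Nat.choose_succ_right_eq (k + 1) i
    have ha' : ((2 * k + 1).choose (i + 1 + 1) : ℝ) * (i + 2) =
        ((2 * k + 1).choose (i + 1) : ℝ) * (2 * k - i) := by
      have := congrArg (Nat.cast : ℕ → ℝ) ha
      rw [Nat.cast_mul, Nat.cast_mul, Nat.cast_sub (by omega)] at this
      push_cast at this
      linear_combination this
    have hb' : ((k + 1).choose (i + 1) : ℝ) * (i + 1) =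
        ((k + 1).choose i : ℝ) * (k + 1 - i) := by
      have := congrArg (Nat.cast : ℕ → ℝ) hb
      rw [Nat.cast_mul, Nat.cast_mul, Nat.cast_sub (by omega)] at this
      push_cast at this
      linear_combination this
    have hki : (i : ℝ) ≤ k := by exact_mod_cast (by omega : i ≤ k)
    have hkr : (2 : ℝ) ≤ k := by exact_mod_cast hk
    have hir : (1 : ℝ) ≤ i := by exact_mod_cast hi
    have hratio : ((i : ℝ) + 2) * (k + 1 - i) ≤ (2 * k - i) * (i + 1) := by nlinarith
    have hB : (0 : ℝ) ≤ (k : ℝ) * (2 * k + 1) * ((k + 1).choose i : ℝ) := by positivity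
    have hC : (0 : ℝ) ≤ (2 * k - i) * (i + 1) := by
      apply mul_nonneg <;> linarith
    have hpos : (0 : ℝ) < ((i : ℝ) + 1) * (i + 2) := by positivity
    refine le_of_mul_le_mul_right ?_ hpos
    calc (k : ℝ) * (2 * k + 1) * ((k + 1).choose (i + 1) : ℝ) * ((i + 1) * (i + 2))
        = (k : ℝ) * (2 * k + 1) * ((k + 1).choose i : ℝ) * ((i + 2) * (k + 1 - i)) := by
          linear_combination (k : ℝ) * (2 * k + 1) * (i + 2) * hb'
      _ ≤ (k : ℝ) * (2 * k + 1) * ((k + 1).choose i : ℝ) * ((2 * k - i) * (i + 1)) :=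
          mul_le_mul_of_nonneg_left hratio hB
      _ ≤ (k + 1) * ((2 * k + 1).choose (i + 1) : ℝ) * ((2 * k - i) * (i + 1)) :=
          mul_le_mul_of_nonneg_right ih hC
      _ = (k + 1) * ((2 * k + 1).choose (i + 1 + 1) : ℝ) * ((i + 1) * (i + 2)) := by
          linear_combination -((k : ℝ) + 1) * (i + 1) * ha'

/-- for `k ≥ 2`, `S1^k(α) ≥ 1` implies
`Σ_{i=1}^{2k} C(2k+1,i+1) α_i ≥ k(2k+1)/(k+1)`. -/
theorem initial_budget_bound (k : ℕ) (hk : 2 ≤ k) (α : ℕ → ℝ) (hα : ∀ i, 0 ≤ α i)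
    (h : 1 ≤ ∑ i ∈ Finset.Icc 1 (k + 1), ((k + 1).choose i : ℝ) * α i) :
    ((k : ℝ) * (2 * k + 1)) / (k + 1) ≤
      ∑ i ∈ Finset.Icc 1 (2 * k), ((2 * k + 1).choose (i + 1) : ℝ) * α i := by
  have hk1 : (0 : ℝ) < (k : ℝ) + 1 := by positivity
  rw [div_le_iff₀ hk1]
  calc (k : ℝ) * (2 * k + 1)
      ≤ (k : ℝ) * (2 * k + 1) * ∑ i ∈ Finset.Icc 1 (k + 1), ((k + 1).choose i : ℝ) * α i :=
        le_mul_of_one_le_right (by positivity) h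
    _ ≤ ∑ i ∈ Finset.Icc 1 (k + 1), ((2 * k + 1).choose (i + 1) : ℝ) * α i * (k + 1) := by
        rw [Finset.mul_sum]
        refine Finset.sum_le_sum fun i hi => ?_
        obtain ⟨h1, h2⟩ := Finset.mem_Icc.mp hi
        have := mul_le_mul_of_nonneg_right (choose_coeff_le k hk i h1 h2) (hα i)
        linarith
    _ ≤ (∑ i ∈ Finset.Icc 1 (2 * k), ((2 * k + 1).choose (i + 1) : ℝ) * α i) * (k + 1) := by
        rw [← Finset.sum_mul]
        refine mul_le_mul_of_nonneg_right ?_ hk1.le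
        -- `k + 1 ≤ 2 * k` since `k ≥ 2`, and the extra terms are nonnegative.
        exact Finset.sum_le_sum_of_subset_of_nonneg
          (Finset.Icc_subset_Icc_right (by omega))
          fun i _ _ => mul_nonneg (Nat.cast_nonneg _) (hα i)
end

section
/- Let k ≥ 1 be a natural number and let α_1, α_2, … be nonnegative real numbers with Σ_{i=1}^{k+1} C(k+1,i)·α_i ≥ 1. Then Σ_{i=1}^{2k} C(2k,i)·α_i ≥ 2k/(k+1) = 2 − 2/(k+1). (Hence in the lower model, adding a vertex to a strongly connected 2k-dimensional component costs at least n^{2/(k+1) − 1} in expectation.) -/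
/-!
The bound holds term by term: `C(2k, i) / (2k) ≥ C(k + 1, i) / (k + 1)` for every `i ≥ 1`
(`two_mul_choose_le`). Multiplying by `α i ≥ 0`, summing over `1 ≤ i ≤ k + 1`, and adding the
remaining nonnegative terms up to `2k` gives the claim.
-/

open Finset MeasureTheory
open scoped ENNReal

/-- Since `i * C(n, i) = n * C(n - 1, i - 1)`, the ratio `C(n, i) / n` equals
`C(n - 1, i - 1) / i`, which is monotone in `n`. Here the ratios at `k + 1 ≤ 2 * k` are compared,
with denominators cleared. -/
lemma two_mul_choose_le (k i : ℕ) (hk : 1 ≤ k) (hi : 1 ≤ i) :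
    2 * k * (k + 1).choose i ≤ (k + 1) * (2 * k).choose i := by
  obtain ⟨j, rfl⟩ : ∃ j, i = j + 1 := ⟨i - 1, by omega⟩
  obtain ⟨m, hm⟩ : ∃ m, 2 * k = m + 1 := ⟨2 * k - 1, by omega⟩
  have h1 := Nat.add_one_mul_choose_eq k j
  have h2 := Nat.add_one_mul_choose_eq m j
  have h3 : k.choose j ≤ m.choose j := Nat.choose_le_choose j (by omega)
  rw [hm]
  refine Nat.le_of_mul_le_mul_right ?_ (Nat.succ_pos j)
  calc (m + 1) * (k + 1).choose (j + 1) * (j + 1)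
      = (m + 1) * ((k + 1) * k.choose j) := by rw [h1]; ring
    _ ≤ (m + 1) * ((k + 1) * m.choose j) := by gcongr
    _ = (k + 1) * ((m + 1) * m.choose j) := by ring
    _ = (k + 1) * (m + 1).choose (j + 1) * (j + 1) := by rw [h2]; ring

/-- for `k ≥ 1`, `S1^k(α) ≥ 1` implies
`Σ_{i=1}^{2k} C(2k,i) α_i ≥ 2k/(k+1)`. -/
theorem vertex_addition_cost_bound (k : ℕ) (hk : 1 ≤ k) (α : ℕ → ℝ) (hα : ∀ i, 0 ≤ α i)
    (h : 1 ≤ ∑ i ∈ Finset.Icc 1 (k + 1), ((k + 1).choose i : ℝ) * α i) :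
    (2 * k : ℝ) / (k + 1) ≤
      ∑ i ∈ Finset.Icc 1 (2 * k), ((2 * k).choose i : ℝ) * α i := by
  have hk0 : (0 : ℝ) < k + 1 := by positivity
  rw [div_le_iff₀ hk0]
  calc (2 * k : ℝ)
      ≤ 2 * k * ∑ i ∈ Finset.Icc 1 (k + 1), ((k + 1).choose i : ℝ) * α i :=
        le_mul_of_one_le_right (by positivity) h
    _ = ∑ i ∈ Finset.Icc 1 (k + 1), (2 * k * (k + 1).choose i : ℝ) * α i := by
        rw [Finset.mul_sum]
        exact Finset.sum_congr rfl fun i _ => by ring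
    _ ≤ ∑ i ∈ Finset.Icc 1 (k + 1), ((k + 1) * (2 * k).choose i : ℝ) * α i := by
        refine Finset.sum_le_sum fun i hi => mul_le_mul_of_nonneg_right ?_ (hα i)
        exact_mod_cast two_mul_choose_le k i hk (Finset.mem_Icc.mp hi).1
    -- `k + 1 ≤ 2 * k`, so the range of summation grows, by nonnegative terms
    _ ≤ ∑ i ∈ Finset.Icc 1 (2 * k), ((k + 1) * (2 * k).choose i : ℝ) * α i := by
        refine Finset.sum_le_sum_of_subset_of_nonneg
          (Finset.Icc_subset_Icc_right (by omega)) fun i _ _ => ?_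
        exact mul_nonneg (by positivity) (hα i)
    _ = (∑ i ∈ Finset.Icc 1 (2 * k), ((2 * k).choose i : ℝ) * α i) * (k + 1) := by
        rw [Finset.sum_mul]
        exact Finset.sum_congr rfl fun i _ => by ring
end

section
/- Let C be a finite pure d-dimensional strongly connected simplicial complex on vertex set V, let v be a new vertex not in V, and define C' to be the simplicial complex whose faces are: the faces of C, the sets σ∪{v} for σ a face of C (together with {v}), and all subsets of V. Define Σ'C to be the (d+1)-skeleton of C'. Then: (i) Σ'C is pure (d+1)-dimensional and strongly connected; (ii) if l ≤ d and C contains every subset of V of size at most l+1 (complete l-skeleton), then Σ'C contains every subset of V∪{v} of size at most l+2 (complete (l+1)-skeleton); in particular, if d ≥ 1 then Σ'C contains every subset of V∪{v} of size at most 2 (complete 1-skeleton). -/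
/-!
Write `v = none`. A set `t` is a face of `C'` iff it avoids `v` or its trace `t.eraseNone` on `V` is
a face of `C` (`mem_suspApex`). The completeness claims follow at once.

Purity: a face through `v` is the cone over a face of `C`, which lies in a `d`-face by purity of `C`.
A face inside `V` lies in a `(d+2)`-subset of `V` if there is one; otherwise `V` itself has `d+1`
elements, hence is a `d`-face of `C`, and its cone contains everything.

Strong connectivity: fix a `d`-face `σ₀` of `C`. Coning turns chains of adjacent `d`-faces of `C` into
chains of adjacent `(d+1)`-faces, so all cones are joined to the cone over `σ₀`. The `(d+2)`-subsets of
`V` are joined to each other by exchanging one vertex at a time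
(`reflTransGen_adjRel_of_exchange`), and one that contains `σ₀` is adjacent to the cone over `σ₀`.
-/

open Finset MeasureTheory
open scoped ENNReal

/-- The cone-plus-full-simplex construction `C'` on vertex set `Option V`: the faces of `C`,
the cones `σ ∪ {v}` over faces `σ` of `C` with the new apex `v = none`, and all subsets of
the old vertex set `V`. -/
def suspApex {V : Type} [DecidableEq V] [Fintype V] (C : SComplex V) :
    SComplex (Option V) where
  faces := (C.faces.image fun s => insert none (s.image Option.some)).biUnion
      Finset.powerset ∪ ((Finset.univ : Finset V).image Option.some).powerset
  down_closed := by
    intro s hs t hts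
    rw [Finset.mem_union] at hs ⊢
    rcases hs with hs | hs
    · left
      simp only [Finset.mem_biUnion, Finset.mem_powerset] at hs ⊢
      obtain ⟨u, hu, hsu⟩ := hs
      exact ⟨u, hu, hts.trans hsu⟩
    · right
      exact Finset.mem_powerset.mpr (hts.trans (Finset.mem_powerset.mp hs))

theorem mem_suspApex {V : Type} [DecidableEq V] [Fintype V] (C : SComplex V)
    (t : Finset (Option V)) :
    t ∈ (suspApex C).faces ↔ none ∉ t ∨ t.eraseNone ∈ C.faces := by
  simp only [suspApex, mem_union, mem_biUnion, mem_image, mem_powerset]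
  constructor
  · rintro (⟨_, ⟨s, hs, rfl⟩, hts⟩ | h)
    · right
      refine C.down_closed hs fun x hx => ?_
      have := hts (mem_eraseNone.1 hx)
      simpa using this
    · left
      intro hn
      simpa using h hn
  · rintro (h | h)
    · right
      intro x hx
      cases x with
      | none => exact absurd hx h
      | some x => simp
    · left
      refine ⟨_, ⟨_, h, rfl⟩, fun x hx => ?_⟩
      cases x with
      | none => simp
      | some x => simpa using hx

theorem adjRel_symm_s18 {V : Type} [DecidableEq V] (X : SComplex V) (d : ℕ) :
    Std.Symm (AdjRel X d) :=
  ⟨fun _ _ h => ⟨h.2.1, h.1, by rw [inter_comm]; exact h.2.2⟩⟩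

/-- If every `(k+1)`-subset of `U` is a face, any two of them are joined by a chain of adjacent
`k`-faces, obtained by exchanging one vertex at a time. -/
theorem reflTransGen_adjRel_of_exchange {V : Type} [DecidableEq V] (X : SComplex V) (k : ℕ)
    (U : Set V) (hU : ∀ s : Finset V, (s : Set V) ⊆ U → s.card = k + 1 → s ∈ X.faces)
    (τ : Finset V) (hτU : (τ : Set V) ⊆ U) (hτ : τ.card = k + 1) :
    ∀ (m : ℕ) (σ : Finset V), (σ \ τ).card = m → (σ : Set V) ⊆ U → σ.card = k + 1 →
      Relation.ReflTransGen (AdjRel X k) σ τ := by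
  intro m
  induction m with
  | zero =>
    intro σ hm _ hσ
    have hsub : σ ⊆ τ := by simpa [sdiff_eq_empty_iff_subset] using hm
    rw [eq_of_subset_of_card_le hsub (by omega)]
  | succ m ih =>
    intro σ hm hσU hσ
    obtain ⟨a, ha⟩ : (σ \ τ).Nonempty := by
      rw [← card_pos]; omega
    have hcard : (τ \ σ).card = (σ \ τ).card := card_sdiff_comm (by omega)
    obtain ⟨b, hb⟩ : (τ \ σ).Nonempty := by
      rw [← card_pos]; omega
    rw [mem_sdiff] at ha hb
    have hbe : b ∉ σ.erase a := fun h => hb.2 (mem_of_mem_erase h)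
    have hc : (insert b (σ.erase a)).card = k + 1 := by
      rw [card_insert_of_notMem hbe, card_erase_of_mem ha.1]; omega
    have hsU : ((insert b (σ.erase a) : Finset V) : Set V) ⊆ U := by
      intro x hx
      simp only [coe_insert, coe_erase, Set.mem_insert_iff] at hx
      rcases hx with rfl | hx
      · exact hτU hb.1
      · exact hσU hx.1
    refine Relation.ReflTransGen.head ?_ (ih (insert b (σ.erase a)) ?_ hsU hc)
    · refine ⟨mem_filter.2 ⟨hU _ hσU hσ, hσ⟩, mem_filter.2 ⟨hU _ hsU hc, hc⟩, ?_⟩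
      have : σ.erase a ⊆ σ ∩ insert b (σ.erase a) :=
        subset_inter (erase_subset _ _) (subset_insert _ _)
      have := card_le_card this
      rw [card_erase_of_mem ha.1] at this
      omega
    · have : insert b (σ.erase a) \ τ = (σ \ τ).erase a := by
        rw [insert_sdiff_of_mem _ hb.1, erase_sdiff_comm]
      rw [this, card_erase_of_mem (mem_sdiff.2 ha)]
      omega

/-- the truncated suspension `Σ'C = sk_{d+1}(C')` of a pure `d`-dimensional
strongly connected complex `C` (with vertex set all of `V`) is pure `(d+1)`-dimensional and
strongly connected, and it turns a complete `l`-skeleton into a complete `(l+1)`-skeleton;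
in particular for `d ≥ 1` it has a complete 1-skeleton. -/
theorem truncated_suspension_properties {V : Type} [DecidableEq V] [Fintype V]
    (C : SComplex V) (d : ℕ) (hvert : ∀ w : V, {w} ∈ C.faces)
    (hpure : IsPure C d) (hsc : StronglyConnected C d) :
    (IsPure (skeleton (suspApex C) (d + 1)) (d + 1) ∧
      StronglyConnected (skeleton (suspApex C) (d + 1)) (d + 1)) ∧
    (∀ l : ℕ, l ≤ d → (∀ s : Finset V, s.card ≤ l + 1 → s ∈ C.faces) →
      ∀ t : Finset (Option V), t.card ≤ l + 2 →
        t ∈ (skeleton (suspApex C) (d + 1)).faces) ∧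
    (1 ≤ d → ∀ t : Finset (Option V), t.card ≤ 2 →
      t ∈ (skeleton (suspApex C) (d + 1)).faces) := by
  obtain ⟨⟨σ₀, hσ₀⟩, hconn⟩ := hsc
  have hσ₀' := mem_filter.1 hσ₀
  have hmem : ∀ t : Finset (Option V), t ∈ (skeleton (suspApex C) (d + 1)).faces ↔
      (none ∉ t ∨ t.eraseNone ∈ C.faces) ∧ t.card ≤ d + 2 := by
    intro t
    simp only [skeleton, mem_filter, mem_suspApex C]
  have hcomplete : ∀ l : ℕ, l ≤ d → (∀ s : Finset V, s.card ≤ l + 1 → s ∈ C.faces) →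
      ∀ t : Finset (Option V), t.card ≤ l + 2 →
        t ∈ (skeleton (suspApex C) (d + 1)).faces := by
    intro l hl hall t ht
    refine (hmem t).2 ⟨?_, by omega⟩
    by_cases hn : none ∈ t
    · right
      apply hall
      have := card_eraseNone_of_mem hn
      omega
    · exact Or.inl hn
  have hcone : ∀ s ∈ dimFaces C d,
      insertNone s ∈ dimFaces (skeleton (suspApex C) (d + 1)) (d + 1) := by
    intro s hs
    have hs' := mem_filter.1 hs
    refine mem_filter.2 ⟨(hmem _).2 ⟨Or.inr ?_, ?_⟩, ?_⟩
    · simpa using hs'.1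
    · rw [card_insertNone]; omega
    · rw [card_insertNone]; omega
  refine ⟨⟨?_, ?_⟩, hcomplete, ?_⟩
  · intro s hs
    obtain ⟨h1, h2⟩ := (hmem s).1 hs
    -- It suffices to put the trace of `s` on `V` into a `d`-face of `C`.
    have key : ∀ u ∈ C.faces, u.card = d + 1 → s.eraseNone ⊆ u →
        ∃ t ∈ (skeleton (suspApex C) (d + 1)).faces, s ⊆ t ∧ t.card = d + 1 + 1 := by
      intro u hu huc hsu
      have h := mem_filter.1 (hcone u (mem_filter.2 ⟨hu, huc⟩))
      refine ⟨_, h.1, fun x hx => ?_, h.2⟩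
      cases x with
      | none => simp
      | some x => simpa using hsu (mem_eraseNone.2 hx)
    by_cases hf : s.eraseNone ∈ C.faces
    · obtain ⟨u, hu, hsu, huc⟩ := hpure _ hf
      exact key u hu huc hsu
    · have hn : none ∉ s := h1.resolve_right hf
      have hse : s.eraseNone.card = s.card := card_eraseNone_of_not_mem hn
      by_cases hV : d + 2 ≤ (univ : Finset V).card
      · obtain ⟨u, hsu, -, huc⟩ := exists_subsuperset_card_eq (subset_univ s.eraseNone)
          (n := d + 2) (by omega) hV
        refine ⟨u.map Function.Embedding.some, (hmem _).2 ⟨Or.inl (by simp), ?_⟩, ?_, ?_⟩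
        · rw [card_map]; omega
        · intro x hx
          cases x with
          | none => exact absurd hx hn
          | some x => simpa using hsu (mem_eraseNone.2 hx)
        · rw [card_map]; omega
      · have huniv : σ₀ = univ := eq_of_subset_of_card_le (subset_univ _) (by omega)
        exact key σ₀ hσ₀'.1 hσ₀'.2 (huniv ▸ subset_univ _)
  · have hreach : ∀ ρ ∈ dimFaces (skeleton (suspApex C) (d + 1)) (d + 1),
        Relation.ReflTransGen (AdjRel (skeleton (suspApex C) (d + 1)) (d + 1)) ρ
          (insertNone σ₀) := by
      intro ρ hρ
      obtain ⟨hρf, hρc⟩ := mem_filter.1 hρ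
      obtain ⟨h1, -⟩ := (hmem ρ).1 hρf
      by_cases hn : none ∈ ρ
      · have hface : ρ.eraseNone ∈ C.faces := h1.resolve_left (not_not.2 hn)
        have hcard := card_eraseNone_of_mem hn
        have hd : ρ.eraseNone ∈ dimFaces C d := mem_filter.2 ⟨hface, by omega⟩
        have heq : insertNone ρ.eraseNone = ρ := by
          rw [insertNone_eraseNone, insert_eq_of_mem hn]
        rw [← heq]
        refine Relation.ReflTransGen.lift (fun s => insertNone s) ?_ _ _ (hconn _ hd _ hσ₀)
        intro a b hab
        refine ⟨hcone _ hab.1, hcone _ hab.2.1, ?_⟩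
        beta_reduce
        have : insertNone (a ∩ b) ⊆ insertNone a ∩ insertNone b :=
          subset_inter (insertNone.monotone inter_subset_left)
            (insertNone.monotone inter_subset_right)
        have := card_le_card this
        rw [card_insertNone] at this
        have := hab.2.2
        omega
      · have hse : ρ.eraseNone.card = ρ.card := card_eraseNone_of_not_mem hn
        have hV : d + 2 ≤ (univ : Finset V).card := by
          have := card_le_card (subset_univ ρ.eraseNone)
          omega
        obtain ⟨u, hsu, -, huc⟩ := exists_subsuperset_card_eq (subset_univ σ₀)
          (n := d + 2) (by omega) hV
        have hall : ∀ s : Finset (Option V), (s : Set (Option V)) ⊆ {x | x ≠ none} →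
            s.card = d + 1 + 1 → s ∈ (skeleton (suspApex C) (d + 1)).faces :=
          fun s hs hsc => (hmem s).2 ⟨Or.inl fun h => hs h rfl, by omega⟩
        have hum : ((u.map Function.Embedding.some : Finset (Option V)) : Set (Option V)) ⊆
            {x | x ≠ none} := by
          intro x hx
          rintro rfl
          simp at hx
        have hucm : (u.map (Function.Embedding.some (α := V))).card = d + 1 + 1 := by
          rw [card_map]; omega
        refine (reflTransGen_adjRel_of_exchange _ (d + 1) {x | x ≠ none} hall _ hum hucm _ ρ rfl
          (fun x hx h => hn (h ▸ hx)) hρc).tail ?_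
        refine ⟨mem_filter.2 ⟨hall _ hum hucm, hucm⟩, hcone _ hσ₀, ?_⟩
        have : σ₀.map Function.Embedding.some ⊆
            u.map Function.Embedding.some ∩ insertNone σ₀ := by
          refine subset_inter (map_subset_map.2 hsu) fun x hx => ?_
          obtain ⟨y, hy, rfl⟩ := mem_map.1 hx
          simpa using hy
        have := card_le_card this
        rw [card_map] at this
        omega
    have := adjRel_symm_s18 (skeleton (suspApex C) (d + 1)) (d + 1)
    exact ⟨⟨_, hcone _ hσ₀⟩, fun σ hσ τ hτ =>
      (hreach σ hσ).trans (Relation.ReflTransGen.stdSymm.symm _ _ (hreach τ hτ))⟩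
  · intro hd
    refine hcomplete 0 (by omega) fun s hs => ?_
    rcases s.eq_empty_or_nonempty with rfl | hs'
    · exact C.down_closed hσ₀'.1 (empty_subset _)
    · obtain ⟨w, rfl⟩ := card_eq_one.1 (le_antisymm (by omega) hs'.card_pos)
      exact hvert w
end
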